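/- Leibniz rule in tangent cohomology: for every bilinear map μ ∈ C² and all multilinear maps h ∈ C^m, f ∈ C^n, g ∈ C^p with δ_μ h = 0, δ_μ f = 0 and δ_μ g = 0, one has [h, f ⌣ g] − [h,f] ⌣ g − (−1)^{(m−1)n} f ⌣ [h,g] = −(−1)^{p−1} δ_μ⟨h|fg⟩; in particular, the failure of the left Leibniz rule on cocycles is a coboundary of δ_μ, so the Leibniz rule [h, f ⌣ g] = [h,f] ⌣ g + (−1)^{(m−1)n} f ⌣ [h,g] holds in the tangent cohomology H_μ(C). -/

import Mathlib

open Finset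

section OperadPrelude

variable {K : Type*} [CommRing K] {L : Type*} [AddCommGroup L] [Module K L]

/-- `C K L n`: the `K`-module of `n`-multilinear maps `L^n → L`
(the degree-`n` component of the endomorphism operad of `L`). -/
abbrev C (K L : Type*) [CommRing K] [AddCommGroup L] [Module K L] (n : ℕ) :=
  MultilinearMap K (fun _ : Fin n => L) L

/-- The extension of an `n`-ary multilinear operation to sequences `ℕ → L`:
it evaluates `f` on the first `n` entries of the sequence.  Two `n`-ary
multilinear operations are equal iff their extensions are equal, so operadic
identities are stated as identities between extensions. -/
def ex {n : ℕ} (f : C K L n) : (ℕ → L) → L := fun x => f fun j => x j.1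

/-- The sign `(-1)^e` for an integer exponent `e`. -/
def sgn (e : ℤ) : ℤ := (((-1 : ℤˣ) ^ e : ℤˣ) : ℤ)

/-- Partial composition `f ∘ᵢ g`, where `n = deg g`:
`(f ∘ᵢ g)(x₀, x₁, …) = (-1)^{i(n-1)} f(x₀,…,x_{i-1}, g(x_i,…,x_{i+n-1}), x_{i+n},…)`. -/
def pc (n i : ℕ) (f g : (ℕ → L) → L) : (ℕ → L) → L :=
  fun x => sgn ((i : ℤ) * ((n : ℤ) - 1)) •
    f fun j => if j < i then x j else if j = i then g (fun k => x (i + k)) else x (j + n - 1)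

/-- Total composition `f ∘ g := Σ_{i=0}^{m-1} f ∘ᵢ g`, where `m = deg f`, `n = deg g`. -/
def tc (m n : ℕ) (f g : (ℕ → L) → L) : (ℕ → L) → L :=
  fun x => ∑ i ∈ Finset.range m, pc n i f g x

/-- The associator `(h, f, g) := (h ∘ f) ∘ g − h ∘ (f ∘ g)` of the total composition,
where `m = deg h`, `n = deg f`, `p = deg g`. -/
def assoc (m n p : ℕ) (h f g : (ℕ → L) → L) : (ℕ → L) → L :=
  fun x => tc (m + n - 1) p (tc m n h f) g x - tc m (n + p - 1) h (tc n p f g) x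

/-- The brace `⟨h|fg⟩ := Σ (h ∘ᵢ f) ∘ⱼ g`, summed over `0 ≤ i ≤ m-2`,
`i + n ≤ j ≤ m + n - 2`, where `m = deg h`, `n = deg f`, `p = deg g`. -/
def br2 (m n p : ℕ) (h f g : (ℕ → L) → L) : (ℕ → L) → L :=
  fun x => ∑ i ∈ Finset.range (m - 1), ∑ j ∈ Finset.Icc (i + n) (m + n - 2),
    pc p j (pc n i h f) g x

/-- The triple brace `⟨h|fgb⟩ := Σ ((h ∘ᵢ f) ∘ⱼ g) ∘ₖ b`, summed over `0 ≤ i ≤ m-3`,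
`i + n ≤ j ≤ m + n - 3`, `j + p ≤ k ≤ m + n + p - 3`, where
`m = deg h`, `n = deg f`, `p = deg g`, `q = deg b`. -/
def br3 (m n p q : ℕ) (h f g b : (ℕ → L) → L) : (ℕ → L) → L :=
  fun x => ∑ i ∈ Finset.range (m - 2), ∑ j ∈ Finset.Icc (i + n) (m + n - 3),
    ∑ k ∈ Finset.Icc (j + p) (m + n + p - 3),
      pc q k (pc p j (pc n i h f) g) b x

/-- The Gerstenhaber bracket `[f,g] := f ∘ g − (-1)^{|f||g|} g ∘ f`,
where `m = deg f`, `n = deg g`, `|f| = m - 1`, `|g| = n - 1`. -/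
def gb (m n : ℕ) (f g : (ℕ → L) → L) : (ℕ → L) → L :=
  fun x => tc m n f g x - sgn (((m : ℤ) - 1) * ((n : ℤ) - 1)) • tc n m g f x

/-- The cup product `f ⌣ g := (-1)^{deg f} (μ ∘₀ f) ∘_{deg f} g`,
where `m = deg f`, `n = deg g`. -/
def cup (μ : C K L 2) (m n : ℕ) (f g : (ℕ → L) → L) : (ℕ → L) → L :=
  fun x => sgn (m : ℤ) • pc n m (pc m 0 (ex μ) f) g x

/-- The coboundary operator `δ_μ f := −[f, μ]`, where `m = deg f`. -/
def delta (μ : C K L 2) (m : ℕ) (f : (ℕ → L) → L) : (ℕ → L) → L :=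
  fun x => - gb m 2 f (ex μ) x

/-! `⟨h|fg⟩` is a sum over pairs of slots `i < j` of `h`.  Expanding `⟨h|fg⟩ ∘ b` and `⟨h ∘ b|fg⟩`
according to where `b` lands relative to `f` and `g` gives the two pre-Jacobi identities `tc_br2`
and `br2_tc`.  Up to sign `f ⌣ g` is `⟨μ|fg⟩`, and the triple braces `⟨μ|⋯⟩` vanish because `μ` has
only two slots.

A cocycle satisfies `x ∘ μ = (-1)^{|x|} μ ∘ x`.  Hence for `b = μ` the triple braces in the two
identities cancel, and `h ∘ ⟨μ|fg⟩ = ⟨h ∘ μ|fg⟩ - (-1)^{|f|+|g|} ⟨h|fg⟩ ∘ μ`.  Replacing `h ∘ μ` by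
`(-1)^{|h|} μ ∘ h` and expanding `⟨μ ∘ h|fg⟩` produces `μ ∘ ⟨h|fg⟩`, which completes the coboundary,
together with `⟨μ|(h ∘ f)g⟩` and `⟨μ|f(h ∘ g)⟩`.  The other halves of `[h, f]` and `[h, g]` come
from `⟨μ|fg⟩ ∘ h`. -/

theorem sgn_add (a b : ℤ) : sgn (a + b) = sgn a * sgn b := by
  simp only [sgn, zpow_add, Units.val_mul]

theorem sgn_sub (a b : ℤ) : sgn (a - b) = sgn a * sgn b := by
  simp only [sgn, zpow_sub, Int.units_inv_eq_self, Units.val_mul]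

theorem sgn_one : sgn 1 = -1 := rfl

theorem sgn_mul_self (a : ℤ) : sgn a * sgn a = 1 := by
  rw [sgn, ← Units.val_mul, Int.units_mul_self, Units.val_one]

section Sums

variable {A : Type*} [AddCommMonoid A] {m k : ℕ}

theorem sum_range_range_eq_sum_range_Ico (m : ℕ) (T : ℕ → ℕ → A) :
    ∑ j ∈ range m, ∑ i ∈ range j, T i j = ∑ i ∈ range m, ∑ j ∈ Ico (i + 1) m, T i j := by
  simp only [range_eq_Ico, sum_Ico_Ico_comm']

theorem sum_pairs_congr {T U : ℕ → ℕ → A} (hTU : ∀ i j, i < j → j < m → T i j = U i j) :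
    ∑ i ∈ range m, ∑ j ∈ Ico (i + 1) m, T i j = ∑ i ∈ range m, ∑ j ∈ Ico (i + 1) m, U i j :=
  sum_congr rfl fun i _ => sum_congr rfl fun j hj => hTU i j (mem_Ico.1 hj).1 (mem_Ico.1 hj).2

theorem sum_range_slot (hk : k < m) (q : ℕ) (T : ℕ → A) :
    ∑ i ∈ range (m + q - 1), T i
      = ∑ i ∈ range k, T i + ∑ r ∈ range q, T (k + r) + ∑ i ∈ Ico (k + 1) m, T (i + q - 1) := by
  obtain ⟨d, rfl⟩ := Nat.exists_eq_add_of_lt hk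
  rw [show k + d + 1 + q - 1 = k + q + d by omega, sum_range_add, sum_range_add,
    sum_Ico_eq_sum_range, show k + d + 1 - (k + 1) = d by omega]
  congr! 3
  omega

theorem sum_range_two_slots {i j : ℕ} (hij : i < j) (hj : j < m) (n p : ℕ) (T : ℕ → A) :
    ∑ k ∈ range (m + n + p - 2), T k
      = ∑ k ∈ range i, T k + ∑ r ∈ range n, T (i + r) + ∑ k ∈ Ico (i + 1) j, T (k + n - 1)
        + ∑ r ∈ range p, T (j + n - 1 + r) + ∑ k ∈ Ico (j + 1) m, T (k + n + p - 2) := by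
  rw [show m + n + p - 2 = m + n - 1 + p - 1 by omega,
    sum_range_slot (show j + n - 1 < m + n - 1 by omega), sum_range_slot hij,
    sum_Ico_eq_sum_range _ (j + n - 1 + 1), sum_Ico_eq_sum_range _ (j + 1),
    show m + n - 1 - (j + n - 1 + 1) = m - (j + 1) by omega]
  congr! 3
  omega

theorem sum_pairs_sum_range (m n p : ℕ) (T : ℕ → ℕ → ℕ → A) :
    ∑ i ∈ range m, ∑ j ∈ Ico (i + 1) m, ∑ k ∈ range (m + n + p - 2), T i j k
      = ∑ k ∈ range m, ∑ i ∈ Ico (k + 1) m, ∑ j ∈ Ico (i + 1) m, T i j k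
        + ∑ i ∈ range m, ∑ j ∈ Ico (i + 1) m, ∑ r ∈ range n, T i j (i + r)
        + ∑ i ∈ range m, ∑ k ∈ Ico (i + 1) m, ∑ j ∈ Ico (k + 1) m, T i j (k + n - 1)
        + ∑ i ∈ range m, ∑ j ∈ Ico (i + 1) m, ∑ r ∈ range p, T i j (j + n - 1 + r)
        + ∑ i ∈ range m, ∑ j ∈ Ico (i + 1) m, ∑ k ∈ Ico (j + 1) m, T i j (k + n + p - 2) := by
  have split : ∀ i ∈ range m, ∀ j ∈ Ico (i + 1) m, ∑ k ∈ range (m + n + p - 2), T i j k = _ :=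
    fun i _ j hj => sum_range_two_slots (mem_Ico.1 hj).1 (mem_Ico.1 hj).2 n p (T i j)
  rw [sum_congr rfl fun i hi => sum_congr rfl (split i hi)]
  simp only [sum_add_distrib, sum_Ico_Ico_comm', ← sum_range_range_eq_sum_range_Ico m]
  congr! 5
  exact sum_range_range_eq_sum_range_Ico _ _

theorem sum_pairs_slot (hk : k < m) (q : ℕ) (T : ℕ → ℕ → A) :
    ∑ i ∈ range (m + q - 1), ∑ j ∈ Ico (i + 1) (m + q - 1), T i j
      = ∑ i ∈ range k, ∑ j ∈ Ico (i + 1) k, T i j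
        + ∑ i ∈ range k, ∑ r ∈ range q, T i (k + r)
        + ∑ i ∈ range k, ∑ j ∈ Ico (k + 1) m, T i (j + q - 1)
        + ∑ r ∈ range q, ∑ s ∈ Ico (r + 1) q, T (k + r) (k + s)
        + ∑ r ∈ range q, ∑ j ∈ Ico (k + 1) m, T (k + r) (j + q - 1)
        + ∑ i ∈ Ico (k + 1) m, ∑ j ∈ Ico (i + 1) m, T (i + q - 1) (j + q - 1) := by
  have inner : ∀ j ∈ Ico (k + 1) m, ∑ i ∈ range (j + q - 1), T i (j + q - 1)
      = ∑ i ∈ range k, T i (j + q - 1) + ∑ r ∈ range q, T (k + r) (j + q - 1)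
        + ∑ i ∈ Ico (k + 1) j, T (i + q - 1) (j + q - 1) :=
    fun j hj => sum_range_slot (mem_Ico.1 hj).1 q _
  rw [← sum_range_range_eq_sum_range_Ico, sum_range_slot hk, sum_congr rfl inner]
  simp only [sum_range_add, sum_add_distrib, sum_range_range_eq_sum_range_Ico,
    sum_Ico_Ico_comm']
  rw [sum_comm (s := range q) (t := range k), sum_comm (s := Ico (k + 1) m) (t := range k),
    sum_comm (s := Ico (k + 1) m) (t := range q)]
  abel

theorem sum_range_sum_pairs (m q : ℕ) (T : ℕ → ℕ → ℕ → A) :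
    ∑ k ∈ range m, ∑ i ∈ range (m + q - 1), ∑ j ∈ Ico (i + 1) (m + q - 1), T k i j
      = ∑ i ∈ range m, ∑ j ∈ Ico (i + 1) m, ∑ k ∈ Ico (j + 1) m, T k i j
        + ∑ i ∈ range m, ∑ k ∈ Ico (i + 1) m, ∑ r ∈ range q, T k i (k + r)
        + ∑ i ∈ range m, ∑ k ∈ Ico (i + 1) m, ∑ j ∈ Ico (k + 1) m, T k i (j + q - 1)
        + ∑ k ∈ range m, ∑ r ∈ range q, ∑ s ∈ Ico (r + 1) q, T k (k + r) (k + s)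
        + ∑ k ∈ range m, ∑ j ∈ Ico (k + 1) m, ∑ r ∈ range q, T k (k + r) (j + q - 1)
        + ∑ k ∈ range m, ∑ i ∈ Ico (k + 1) m, ∑ j ∈ Ico (i + 1) m,
            T k (i + q - 1) (j + q - 1) := by
  rw [sum_congr rfl fun k hk => sum_pairs_slot (mem_range.1 hk) q (T k)]
  simp only [sum_add_distrib, sum_range_range_eq_sum_range_Ico m, sum_Ico_Ico_comm',
    sum_comm (s := range q)]

end Sums

section Graft

variable {X : Type*} {n i j k : ℕ}

/-- The sequence obtained from `x` by replacing the block of length `n` at position `i` by its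
value under `g`, so that `f ∘ᵢ g` is, up to sign, `f` evaluated on it. -/
def graft (n i : ℕ) (g : (ℕ → X) → X) (x : ℕ → X) : ℕ → X :=
  fun j => if j < i then x j else if j = i then g (fun k => x (i + k)) else x (j + n - 1)

theorem graft_update_of_lt {f : (ℕ → X) → X} (hij : i < j) (hf : DependsOn f (Set.Iio n))
    (x : ℕ → X) (a : X) :
    graft n i f (Function.update x (j + n - 1) a) = Function.update (graft n i f x) j a := by
  have block : f (fun k => Function.update x (j + n - 1) a (i + k)) = f fun k => x (i + k) :=
    hf fun k (hk : k < n) => Function.update_of_ne (by omega) _ _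
  funext l
  grind [graft]

theorem graft_graft_of_lt {f : (ℕ → X) → X} (hij : i < j) (hf : DependsOn f (Set.Iio n))
    (p : ℕ) (g : (ℕ → X) → X) (x : ℕ → X) :
    graft n i f (graft p (j + n - 1) g x) = graft p j g (graft n i f x) := by
  have left_block : f (fun k => graft p (j + n - 1) g x (i + k)) = f fun k => x (i + k) :=
    hf fun k (hk : k < n) => if_pos (by omega)
  have right_block : (fun k => graft n i f x (j + k)) = fun k => x (j + n - 1 + k) := by
    funext k
    grind [graft]
  funext l
  grind [graft]

theorem graft_graft_of_inner (hk : k < n) (i p : ℕ) (f g : (ℕ → X) → X) (x : ℕ → X) :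
    graft n i f (graft p (i + k) g x)
      = graft (n + p - 1) i (fun y => f (graft p k g y)) x := by
  have block : (fun a => graft p (i + k) g x (i + a)) = graft p k g fun a => x (i + a) := by
    funext a
    simp only [graft, Nat.add_lt_add_iff_left, Nat.add_left_cancel_iff, Nat.add_assoc]
    grind
  funext l
  grind [graft]

end Graft

/-- `f` is additive in its `k`-th entry: the only part of multilinearity that moves sums and signs
through a partial composition at slot `k`. -/
def AdditiveAt (f : (ℕ → L) → L) (k : ℕ) : Prop :=
  ∀ x a b, f (Function.update x k (a + b))
    = f (Function.update x k a) + f (Function.update x k b)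

section PartialComposition

variable {m n p i j k : ℕ} {h f g : (ℕ → L) → L}

theorem dependsOn_ex (f : C K L n) : DependsOn (ex f) (Set.Iio n) := fun _ _ hxy =>
  congrArg f (funext fun j => hxy j j.2)

theorem additiveAt_ex (f : C K L n) (hk : k < n) : AdditiveAt (ex f) k := by
  have restrict_update (x : ℕ → L) (a : L) :
      (fun j : Fin n => Function.update x k a j)
        = Function.update (fun j : Fin n => x j) ⟨k, hk⟩ a := by
    funext j
    simp only [Function.update_apply, Fin.ext_iff]
  intro x a b
  simp only [ex, restrict_update, f.map_update_add]

theorem pc_apply (n i : ℕ) (f g : (ℕ → L) → L) (x : ℕ → L) :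
    pc n i f g x = sgn ((i : ℤ) * ((n : ℤ) - 1)) • f (graft n i g x) := rfl

theorem graft_eq_update (n i : ℕ) (g : (ℕ → L) → L) (x : ℕ → L) :
    graft n i g x = Function.update (graft n i 0 x) i (g fun k => x (i + k)) := by
  funext j
  rcases eq_or_ne j i with rfl | hj
  · simp [graft]
  · simp [graft, hj]

theorem pc_add_left (n k : ℕ) (f f' g : (ℕ → L) → L) :
    pc n k (f + f') g = pc n k f g + pc n k f' g := by
  funext x
  simp only [pc_apply, Pi.add_apply, smul_add]

theorem pc_smul_left (n k : ℕ) (c : ℤ) (f g : (ℕ → L) → L) :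
    pc n k (c • f) g = c • pc n k f g :=
  map_zsmul (AddMonoidHom.mk' (pc n k · g) (pc_add_left n k · · g)) c f

theorem pc_sum_left (n k : ℕ) {ι : Type*} (s : Finset ι) (f : ι → (ℕ → L) → L)
    (g : (ℕ → L) → L) : pc n k (∑ a ∈ s, f a) g = ∑ a ∈ s, pc n k (f a) g :=
  map_sum (AddMonoidHom.mk' (pc n k · g) (pc_add_left n k · · g)) f s

theorem pc_add_right (hf : AdditiveAt f k) (n : ℕ) (g g' : (ℕ → L) → L) :
    pc n k f (g + g') = pc n k f g + pc n k f g' := by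
  funext x
  simp only [pc_apply, Pi.add_apply]
  rw [graft_eq_update, Pi.add_apply, hf, ← graft_eq_update, ← graft_eq_update, smul_add]

theorem pc_smul_right (hf : AdditiveAt f k) (n : ℕ) (c : ℤ) (g : (ℕ → L) → L) :
    pc n k f (c • g) = c • pc n k f g :=
  map_zsmul (AddMonoidHom.mk' (pc n k f) (pc_add_right hf n)) c g

theorem pc_sum_right (hf : AdditiveAt f k) (n : ℕ) {ι : Type*} (s : Finset ι)
    (g : ι → (ℕ → L) → L) : pc n k f (∑ a ∈ s, g a) = ∑ a ∈ s, pc n k f (g a) :=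
  map_sum (AddMonoidHom.mk' (pc n k f) (pc_add_right hf n)) g s

theorem pc_pc_of_lt (hij : i < j) (hf : DependsOn f (Set.Iio n)) (p : ℕ)
    (h g : (ℕ → L) → L) :
    pc n i (pc p j h g) f
      = sgn (((n : ℤ) - 1) * ((p : ℤ) - 1)) • pc p (j + n - 1) (pc n i h f) g := by
  funext x
  simp only [Pi.smul_apply, pc_apply, smul_smul]
  rw [graft_graft_of_lt hij hf, ← sgn_add, ← sgn_add, mul_comm (sgn _), ← sgn_sub,
    Nat.cast_sub (by omega)]
  congr 2
  push_cast
  ring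

theorem pc_pc_of_inner (hk : k < n) (hh : AdditiveAt h i) (p : ℕ) (f g : (ℕ → L) → L) :
    pc p (i + k) (pc n i h f) g = pc (n + p - 1) i h (pc p k f g) := by
  have inner : pc p k f g = sgn ((k : ℤ) * ((p : ℤ) - 1)) • fun y => f (graft p k g y) := rfl
  rw [inner, pc_smul_right hh]
  funext x
  simp only [Pi.smul_apply, pc_apply, smul_smul, ← sgn_add]
  rw [graft_graft_of_inner hk, Nat.cast_sub (by omega)]
  congr 2
  push_cast
  ring

theorem additiveAt_pc (hij : i < j) (hh : AdditiveAt h j) (hf : DependsOn f (Set.Iio n)) :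
    AdditiveAt (pc n i h f) (j + n - 1) := by
  intro x a b
  simp only [pc_apply, graft_update_of_lt hij hf]
  rw [hh, smul_add]

end PartialComposition

section Braces

variable {m n p q : ℕ} {h f g b : (ℕ → L) → L}

theorem tc_eq_sum (m n : ℕ) (f g : (ℕ → L) → L) :
    tc m n f g = ∑ i ∈ range m, pc n i f g := by
  funext x
  simp only [tc, Finset.sum_apply]

theorem tc_smul_left (m n : ℕ) (c : ℤ) (f g : (ℕ → L) → L) :
    tc m n (c • f) g = c • tc m n f g := by
  simp only [tc_eq_sum, smul_sum, pc_smul_left]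

theorem tc_smul_right (hf : ∀ k < m, AdditiveAt f k) (n : ℕ) (c : ℤ) (g : (ℕ → L) → L) :
    tc m n f (c • g) = c • tc m n f g := by
  simp only [tc_eq_sum, smul_sum]
  exact sum_congr rfl fun i hi => pc_smul_right (hf i (mem_range.1 hi)) n c g

theorem sum_range_pc_pc {i : ℕ} (hh : AdditiveAt h i) (n p : ℕ) (f g : (ℕ → L) → L) :
    ∑ r ∈ range n, pc p (i + r) (pc n i h f) g = pc (n + p - 1) i h (tc n p f g) := by
  rw [tc_eq_sum, pc_sum_right hh]
  exact sum_congr rfl fun r hr => pc_pc_of_inner (mem_range.1 hr) hh p f g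

theorem br2_eq_sum (m n p : ℕ) (h f g : (ℕ → L) → L) :
    br2 m n p h f g
      = ∑ i ∈ range m, ∑ j ∈ Ico (i + 1) m, pc p (j + n - 1) (pc n i h f) g := by
  funext x
  simp only [br2, Finset.sum_apply]
  refine sum_subset_zero_on_sdiff (range_subset_range.2 (Nat.sub_le m 1)) (fun i hi => ?_)
    fun i _ => ?_
  · simp only [mem_sdiff, mem_range] at hi
    rw [Ico_eq_empty (by omega), sum_empty]
  · refine sum_nbij' (fun j => j + 1 - n) (fun j => j + n - 1) ?_ ?_ ?_ ?_ ?_ <;>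
      grind

theorem br3_eq_sum (m n p q : ℕ) (h f g b : (ℕ → L) → L) :
    br3 m n p q h f g b
      = ∑ i ∈ range m, ∑ j ∈ Ico (i + 1) m, ∑ k ∈ Ico (j + 1) m,
          pc q (k + n + p - 2) (pc p (j + n - 1) (pc n i h f) g) b := by
  funext x
  simp only [br3, Finset.sum_apply]
  refine sum_subset_zero_on_sdiff (range_subset_range.2 (Nat.sub_le m 2)) (fun i hi => ?_)
    fun i hi => ?_
  · simp only [mem_sdiff, mem_range] at hi
    refine sum_eq_zero fun j hj => ?_
    rw [mem_Ico] at hj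
    rw [Ico_eq_empty (by omega), sum_empty]
  · rw [mem_range] at hi
    trans ∑ j ∈ Ico (i + 1) (m - 1), ∑ k ∈ Ico (j + 1) m,
        pc q (k + n + p - 2) (pc p (j + n - 1) (pc n i h f) g) b x
    · refine sum_nbij' (fun j => j + 1 - n) (fun j => j + n - 1) (by grind) (by grind) (by grind)
        (by grind) fun j hj => ?_
      refine sum_nbij' (fun k => k + 2 - n - p) (fun k => k + n + p - 2) ?_ ?_ ?_ ?_ ?_ <;>
        grind
    · refine sum_subset (Ico_subset_Ico_right (Nat.sub_le m 1)) fun j _ hj => ?_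
      rw [Ico_eq_empty (by grind), sum_empty]

theorem br2_eq_zero_of_le_one (hm : m ≤ 1) (n p : ℕ) (h f g : (ℕ → L) → L) :
    br2 m n p h f g = 0 := by
  funext x
  simp only [br2, Nat.sub_eq_zero_of_le hm, range_zero, sum_empty, Pi.zero_apply]

theorem br2_two (n p : ℕ) (h f g : (ℕ → L) → L) :
    br2 2 n p h f g = pc p n (pc n 0 h f) g := by
  simp [br2_eq_sum, sum_range_succ, Nat.add_comm 1 n]

theorem br3_two (n p q : ℕ) (h f g b : (ℕ → L) → L) : br3 2 n p q h f g b = 0 := rfl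

theorem br2_smul_left (m n p : ℕ) (c : ℤ) (h f g : (ℕ → L) → L) :
    br2 m n p (c • h) f g = c • br2 m n p h f g := by
  simp only [br2_eq_sum, pc_smul_left, smul_sum]

theorem br2_add_middle (hh : ∀ k < m, AdditiveAt h k) (f f' g : (ℕ → L) → L) :
    br2 m n p h (f + f') g = br2 m n p h f g + br2 m n p h f' g := by
  simp only [br2_eq_sum, ← sum_add_distrib]
  refine sum_congr rfl fun i hi => sum_congr rfl fun j _ => ?_
  rw [pc_add_right (hh i (mem_range.1 hi)), pc_add_left]

theorem br2_smul_middle (hh : ∀ k < m, AdditiveAt h k) (c : ℤ) (f g : (ℕ → L) → L) :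
    br2 m n p h (c • f) g = c • br2 m n p h f g :=
  map_zsmul (AddMonoidHom.mk' (br2 m n p h · g) (br2_add_middle hh · · g)) c f

theorem br2_sub_middle (hh : ∀ k < m, AdditiveAt h k) (f f' g : (ℕ → L) → L) :
    br2 m n p h (f - f') g = br2 m n p h f g - br2 m n p h f' g :=
  map_sub (AddMonoidHom.mk' (br2 m n p h · g) (br2_add_middle hh · · g)) f f'

theorem br2_add_right (hh : ∀ k < m, AdditiveAt h k) (hf : DependsOn f (Set.Iio n))
    (g g' : (ℕ → L) → L) :
    br2 m n p h f (g + g') = br2 m n p h f g + br2 m n p h f g' := by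
  simp only [br2_eq_sum, ← sum_add_distrib]
  refine sum_congr rfl fun i _ => sum_congr rfl fun j hj => ?_
  rw [mem_Ico] at hj
  exact pc_add_right (additiveAt_pc hj.1 (hh j hj.2) hf) p g g'

theorem br2_smul_right (hh : ∀ k < m, AdditiveAt h k) (hf : DependsOn f (Set.Iio n)) (c : ℤ)
    (g : (ℕ → L) → L) : br2 m n p h f (c • g) = c • br2 m n p h f g :=
  map_zsmul (AddMonoidHom.mk' (br2 m n p h f) (br2_add_right hh hf)) c g

theorem br2_sub_right (hh : ∀ k < m, AdditiveAt h k) (hf : DependsOn f (Set.Iio n))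
    (g g' : (ℕ → L) → L) :
    br2 m n p h f (g - g') = br2 m n p h f g - br2 m n p h f g' :=
  map_sub (AddMonoidHom.mk' (br2 m n p h f) (br2_add_right hh hf)) g g'

theorem tc_br2_eq_sum (m n p q : ℕ) (h f g b : (ℕ → L) → L) :
    tc (m + n + p - 2) q (br2 m n p h f g) b
      = ∑ i ∈ range m, ∑ j ∈ Ico (i + 1) m, ∑ k ∈ range (m + n + p - 2),
          pc q k (pc p (j + n - 1) (pc n i h f) g) b := by
  simp only [tc_eq_sum, br2_eq_sum, pc_sum_left]
  rw [sum_comm]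
  exact sum_congr rfl fun i _ => sum_comm

theorem br2_tc_eq_sum (m n p q : ℕ) (h b f g : (ℕ → L) → L) :
    br2 (m + q - 1) n p (tc m q h b) f g
      = ∑ k ∈ range m, ∑ i ∈ range (m + q - 1), ∑ j ∈ Ico (i + 1) (m + q - 1),
          pc p (j + n - 1) (pc n i (pc q k h b) f) g := by
  simp only [tc_eq_sum, br2_eq_sum, pc_sum_left]
  rw [sum_comm]
  exact sum_congr rfl fun i _ => sum_comm

theorem br2_tc_middle_eq_sum (hh : ∀ k < m, AdditiveAt h k) (q n p : ℕ)
    (b f g : (ℕ → L) → L) :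
    br2 m (q + n - 1) p h (tc q n b f) g
      = ∑ k ∈ range m, ∑ j ∈ Ico (k + 1) m, ∑ r ∈ range q,
          pc p (j + q - 1 + n - 1) (pc n (k + r) (pc q k h b) f) g := by
  rw [br2_eq_sum]
  refine sum_pairs_congr fun k j hkj hj => ?_
  rw [← sum_range_pc_pc (hh k (hkj.trans hj)), pc_sum_left]
  refine sum_congr rfl fun r hr => ?_
  rw [mem_range] at hr
  rw [show j + (q + n - 1) - 1 = j + q - 1 + n - 1 by omega]

theorem br2_tc_right_eq_sum (hh : ∀ k < m, AdditiveAt h k) (hf : DependsOn f (Set.Iio n))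
    (q p : ℕ) (b g : (ℕ → L) → L) :
    br2 m n (q + p - 1) h f (tc q p b g)
      = ∑ i ∈ range m, ∑ k ∈ Ico (i + 1) m, ∑ r ∈ range q,
          pc p (k + n - 1 + r) (pc q (k + n - 1) (pc n i h f) b) g := by
  rw [br2_eq_sum]
  exact sum_pairs_congr fun i k hik hk =>
    (sum_range_pc_pc (additiveAt_pc hik (hh k hk) hf) q p b g).symm

theorem tc_br2 (hh : ∀ k < m, AdditiveAt h k) (hf : DependsOn f (Set.Iio n))
    (hb : DependsOn b (Set.Iio q)) (p : ℕ) (g : (ℕ → L) → L) :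
    tc (m + n + p - 2) q (br2 m n p h f g) b
      = br3 m n p q h f g b + br2 m n (p + q - 1) h f (tc p q g b)
        + sgn (((q : ℤ) - 1) * ((p : ℤ) - 1))
          • (br3 m n q p h f b g + br2 m (n + q - 1) p h (tc n q f b) g)
        + sgn (((q : ℤ) - 1) * (((n : ℤ) - 1) + ((p : ℤ) - 1))) • br3 m q n p h b f g := by
  let T (i j k : ℕ) : (ℕ → L) → L := pc q k (pc p (j + n - 1) (pc n i h f) g) b
  have past_g {i j k : ℕ} (hk : k < j + n - 1) :
      T i j k = sgn (((q : ℤ) - 1) * ((p : ℤ) - 1))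
        • pc p (j + n - 1 + q - 1) (pc q k (pc n i h f) b) g := pc_pc_of_lt hk hb p _ g
  have before_f : ∑ k ∈ range m, ∑ i ∈ Ico (k + 1) m, ∑ j ∈ Ico (i + 1) m, T i j k
      = sgn (((q : ℤ) - 1) * (((n : ℤ) - 1) + ((p : ℤ) - 1))) • br3 m q n p h b f g := by
    simp only [br3_eq_sum, smul_sum]
    refine sum_pairs_congr fun k i hki _ => sum_congr rfl fun j hj => ?_
    rw [mem_Ico] at hj
    rw [past_g (by omega), pc_pc_of_lt hki hb, pc_smul_left, smul_smul, ← sgn_add, ← mul_add,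
      add_comm ((p : ℤ) - 1), show j + n - 1 + q - 1 = j + q + n - 2 by omega]
  have inside_f : ∑ i ∈ range m, ∑ j ∈ Ico (i + 1) m, ∑ r ∈ range n, T i j (i + r)
      = sgn (((q : ℤ) - 1) * ((p : ℤ) - 1)) • br2 m (n + q - 1) p h (tc n q f b) g := by
    simp only [br2_tc_middle_eq_sum hh, smul_sum]
    refine sum_pairs_congr fun i j hij _ => sum_congr rfl fun r hr => past_g ?_
    rw [mem_range] at hr
    omega
  have between : ∑ i ∈ range m, ∑ k ∈ Ico (i + 1) m, ∑ j ∈ Ico (k + 1) m, T i j (k + n - 1)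
      = sgn (((q : ℤ) - 1) * ((p : ℤ) - 1)) • br3 m n q p h f b g := by
    simp only [br3_eq_sum, smul_sum]
    refine sum_pairs_congr fun i k hik _ => sum_congr rfl fun j hj => ?_
    rw [mem_Ico] at hj
    rw [past_g (by omega), show j + n - 1 + q - 1 = j + n + q - 2 by omega]
  have inside_g : ∑ i ∈ range m, ∑ j ∈ Ico (i + 1) m, ∑ r ∈ range p, T i j (j + n - 1 + r)
      = br2 m n (p + q - 1) h f (tc p q g b) :=
    (br2_tc_right_eq_sum hh hf p q g b).symm
  rw [tc_br2_eq_sum, sum_pairs_sum_range, before_f, inside_f, between, inside_g, ← br3_eq_sum,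
    smul_add]
  abel

theorem sum_pairs_pc_pc {k : ℕ} (hk : AdditiveAt h k) (q n p : ℕ) (b f g : (ℕ → L) → L) :
    ∑ r ∈ range q, ∑ s ∈ Ico (r + 1) q, pc p (k + s + n - 1) (pc n (k + r) (pc q k h b) f) g
      = pc (q + n + p - 2) k h (br2 q n p b f g) := by
  simp only [br2_eq_sum, pc_sum_right hk]
  refine sum_pairs_congr fun r s hrs hs => ?_
  rw [pc_pc_of_inner (hrs.trans hs) hk, show k + s + n - 1 = k + (s + n - 1) by omega,
    pc_pc_of_inner (by omega) hk, show q + n - 1 + p - 1 = q + n + p - 2 by omega]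

theorem pc_pc_pc_of_lt_of_lt {i j k : ℕ} (hij : i < j) (hjk : j < k)
    (hf : DependsOn f (Set.Iio n)) (hg : DependsOn g (Set.Iio p)) (q : ℕ)
    (h b : (ℕ → L) → L) :
    pc p (j + n - 1) (pc n i (pc q k h b) f) g
      = sgn ((((n : ℤ) - 1) + ((p : ℤ) - 1)) * ((q : ℤ) - 1))
        • pc q (k + n + p - 2) (pc p (j + n - 1) (pc n i h f) g) b := by
  rw [pc_pc_of_lt (hij.trans hjk) hf, pc_smul_left, pc_pc_of_lt (by omega) hg, smul_smul,
    ← sgn_add, ← add_mul, show k + n - 1 + p - 1 = k + n + p - 2 by omega]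

theorem br2_tc (hh : ∀ k < m, AdditiveAt h k) (hf : DependsOn f (Set.Iio n))
    (hg : DependsOn g (Set.Iio p)) (q : ℕ) (b : (ℕ → L) → L) :
    br2 (m + q - 1) n p (tc m q h b) f g
      = tc m (q + n + p - 2) h (br2 q n p b f g) + br2 m (q + n - 1) p h (tc q n b f) g
        + br3 m q n p h b f g
        + sgn (((n : ℤ) - 1) * ((q : ℤ) - 1))
          • (br2 m n (q + p - 1) h f (tc q p b g) + br3 m n q p h f b g)
        + sgn ((((n : ℤ) - 1) + ((p : ℤ) - 1)) * ((q : ℤ) - 1)) • br3 m n p q h f g b := by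
  let T (k i j : ℕ) : (ℕ → L) → L := pc p (j + n - 1) (pc n i (pc q k h b) f) g
  have f_before {i j k : ℕ} (hik : i < k) :
      T k i j = sgn (((n : ℤ) - 1) * ((q : ℤ) - 1))
        • pc p (j + n - 1) (pc q (k + n - 1) (pc n i h f) b) g := by
    simp only [T]
    rw [pc_pc_of_lt hik hf, pc_smul_left]
  have after_g : ∑ i ∈ range m, ∑ j ∈ Ico (i + 1) m, ∑ k ∈ Ico (j + 1) m, T k i j
      = sgn ((((n : ℤ) - 1) + ((p : ℤ) - 1)) * ((q : ℤ) - 1)) • br3 m n p q h f g b := by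
    simp only [br3_eq_sum, smul_sum]
    exact sum_pairs_congr fun i j hij _ => sum_congr rfl fun k hk =>
      pc_pc_pc_of_lt_of_lt hij (mem_Ico.1 hk).1 hf hg q h b
  have inside_g : ∑ i ∈ range m, ∑ k ∈ Ico (i + 1) m, ∑ r ∈ range q, T k i (k + r)
      = sgn (((n : ℤ) - 1) * ((q : ℤ) - 1)) • br2 m n (q + p - 1) h f (tc q p b g) := by
    simp only [br2_tc_right_eq_sum hh hf, smul_sum]
    refine sum_pairs_congr fun i k hik _ => sum_congr rfl fun r _ => ?_
    rw [f_before hik, show k + r + n - 1 = k + n - 1 + r by omega]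
  have between : ∑ i ∈ range m, ∑ k ∈ Ico (i + 1) m, ∑ j ∈ Ico (k + 1) m, T k i (j + q - 1)
      = sgn (((n : ℤ) - 1) * ((q : ℤ) - 1)) • br3 m n q p h f b g := by
    simp only [br3_eq_sum, smul_sum]
    refine sum_pairs_congr fun i k hik _ => sum_congr rfl fun j hj => ?_
    rw [mem_Ico] at hj
    rw [f_before hik, show j + q - 1 + n - 1 = j + n + q - 2 by omega]
  have inside_both : ∑ k ∈ range m, ∑ r ∈ range q, ∑ s ∈ Ico (r + 1) q, T k (k + r) (k + s)
      = tc m (q + n + p - 2) h (br2 q n p b f g) := by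
    rw [tc_eq_sum]
    exact sum_congr rfl fun k hk => sum_pairs_pc_pc (hh k (mem_range.1 hk)) q n p b f g
  have inside_f : ∑ k ∈ range m, ∑ j ∈ Ico (k + 1) m, ∑ r ∈ range q, T k (k + r) (j + q - 1)
      = br2 m (q + n - 1) p h (tc q n b f) g :=
    (br2_tc_middle_eq_sum hh q n p b f g).symm
  have before_f : ∑ k ∈ range m, ∑ i ∈ Ico (k + 1) m, ∑ j ∈ Ico (i + 1) m,
      T k (i + q - 1) (j + q - 1) = br3 m q n p h b f g := by
    rw [br3_eq_sum]
    refine sum_pairs_congr fun k i _ _ => sum_congr rfl fun j hj => ?_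
    rw [mem_Ico] at hj
    simp only [T]
    rw [show j + q - 1 + n - 1 = j + q + n - 2 by omega]
  rw [br2_tc_eq_sum, sum_range_sum_pairs, after_g, inside_g, between, inside_both, inside_f,
    before_f, smul_add]
  abel

end Braces

section Cocycles

variable {m n p : ℕ} {u h f g : (ℕ → L) → L}

theorem gb_eq_sub (m n : ℕ) (f g : (ℕ → L) → L) :
    gb m n f g = tc m n f g - sgn (((m : ℤ) - 1) * ((n : ℤ) - 1)) • tc n m g f := rfl

theorem gb_smul_right (hh : ∀ k < m, AdditiveAt h k) (n : ℕ) (c : ℤ) (f : (ℕ → L) → L) :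
    gb m n h (c • f) = c • gb m n h f := by
  rw [gb_eq_sub, gb_eq_sub, tc_smul_left, tc_smul_right hh, smul_comm, smul_sub]

theorem delta_eq_sub (μ : C K L 2) (n : ℕ) (f : (ℕ → L) → L) :
    delta μ n f = sgn ((n : ℤ) - 1) • tc 2 n (ex μ) f - tc n 2 f (ex μ) := by
  have delta_eq_neg_gb : delta μ n f = -gb n 2 f (ex μ) := rfl
  rw [delta_eq_neg_gb, gb_eq_sub, neg_sub, show ((2 : ℕ) : ℤ) - 1 = 1 from rfl, mul_one]

theorem delta_eq_zero_iff (μ : C K L 2) (n : ℕ) (f : (ℕ → L) → L) :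
    delta μ n f = 0 ↔ tc n 2 f (ex μ) = sgn ((n : ℤ) - 1) • tc 2 n (ex μ) f := by
  rw [delta_eq_sub, sub_eq_zero, eq_comm]

theorem delta_br2 (μ : C K L 2) (m n p : ℕ) (h f g : (ℕ → L) → L) :
    delta μ (m + n + p - 2) (br2 m n p h f g)
      = sgn (((m : ℤ) - 1) + ((n : ℤ) - 1) + ((p : ℤ) - 1))
          • tc 2 (m + n + p - 2) (ex μ) (br2 m n p h f g)
        - tc (m + n + p - 2) 2 (br2 m n p h f g) (ex μ) := by
  rw [delta_eq_sub]
  rcases le_or_gt m 1 with hm | hm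
  · have tc_zero : tc 2 (m + n + p - 2) (ex μ) 0 = 0 := by
      simpa only [zero_smul] using
        tc_smul_right (fun _ => additiveAt_ex μ) (m + n + p - 2) 0 (0 : (ℕ → L) → L)
    rw [br2_eq_zero_of_le_one hm, tc_zero, smul_zero, smul_zero]
  · rw [Nat.cast_sub (by omega)]
    congr 3
    push_cast
    ring

theorem cup_eq_br2 (μ : C K L 2) (n p : ℕ) (f g : (ℕ → L) → L) :
    cup μ n p f g = sgn n • br2 2 n p (ex μ) f g := by
  rw [br2_two]
  rfl

theorem cup_gb (μ : C K L 2) (m n p : ℕ) (h f g : (ℕ → L) → L) :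
    cup μ (m + n - 1) p (gb m n h f) g
      = sgn (((m : ℤ) - 1) + n) • br2 2 (m + n - 1) p (ex μ) (gb m n h f) g := by
  rcases Nat.eq_zero_or_pos (m + n) with hmn | hmn
  · obtain ⟨rfl, rfl⟩ : m = 0 ∧ n = 0 := by omega
    have gb_zero : gb 0 0 h f = (0 : ℤ) • 0 := by
      simp only [gb_eq_sub, tc_eq_sum, range_zero, sum_empty, smul_zero, sub_zero]
    rw [cup_eq_br2, gb_zero, br2_smul_middle fun _ => additiveAt_ex μ]
    simp only [zero_smul, smul_zero]
  · rw [cup_eq_br2, Nat.cast_sub hmn]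
    congr 2
    push_cast
    ring

theorem br2_tc_two_left (hu : ∀ k < 2, AdditiveAt u k) (hf : DependsOn f (Set.Iio n))
    (hg : DependsOn g (Set.Iio p)) (m : ℕ) (h : (ℕ → L) → L) :
    br2 (m + 1) n p (tc 2 m u h) f g
      = tc 2 (m + n + p - 2) u (br2 m n p h f g) + br2 2 (m + n - 1) p u (tc m n h f) g
        + sgn (((m : ℤ) - 1) * ((n : ℤ) - 1)) • br2 2 n (m + p - 1) u f (tc m p h g) := by
  have expansion := br2_tc hu hf hg m h
  simp only [br3_two, smul_zero, add_zero] at expansion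
  rw [mul_comm ((m : ℤ) - 1), ← expansion, show 2 + m - 1 = m + 1 by omega]

theorem tc_br2_two_left (hu : ∀ k < 2, AdditiveAt u k) (hf : DependsOn f (Set.Iio n))
    (hh : DependsOn h (Set.Iio m)) (p : ℕ) (g : (ℕ → L) → L) :
    tc (n + p) m (br2 2 n p u f g) h
      = br2 2 n (m + p - 1) u f (tc p m g h)
        + sgn (((m : ℤ) - 1) * ((p : ℤ) - 1)) • br2 2 (m + n - 1) p u (tc n m f h) g := by
  have expansion := tc_br2 hu hf hh p g
  simp only [br3_two, smul_zero, add_zero, zero_add] at expansion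
  rw [add_comm m p, add_comm m n, ← expansion, show 2 + n + p - 2 = n + p by omega]

theorem tc_br2_two_right (hh : ∀ k < m, AdditiveAt h k) (hu : DependsOn u (Set.Iio 2))
    (hf : DependsOn f (Set.Iio n)) (hg : DependsOn g (Set.Iio p))
    (hfu : tc n 2 f u = sgn ((n : ℤ) - 1) • tc 2 n u f)
    (hgu : tc p 2 g u = sgn ((p : ℤ) - 1) • tc 2 p u g) :
    tc m (n + p) h (br2 2 n p u f g)
      = br2 (m + 1) n p (tc m 2 h u) f g
        - sgn (((n : ℤ) - 1) + ((p : ℤ) - 1)) • tc (m + n + p - 2) 2 (br2 m n p h f g) u := by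
  have inner := br2_tc hh hf hg 2 u
  have outer := tc_br2 hh hf hu p g
  rw [hfu, hgu, br2_smul_middle hh, br2_smul_right hh hf] at outer
  simp only [show 2 + n + p - 2 = n + p by omega, show 2 + n - 1 = n + 1 by omega,
    show 2 + p - 1 = p + 1 by omega, show m + 2 - 1 = m + 1 by omega,
    show p + 2 - 1 = p + 1 by omega, show n + 2 - 1 = n + 1 by omega] at inner outer
  rw [inner, outer]
  have hn := sgn_mul_self ((n : ℤ) - 1)
  have hp := sgn_mul_self ((p : ℤ) - 1)
  simp only [Nat.cast_ofNat, Int.reduceSub, one_mul, mul_one, sgn_add]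
  match_scalars <;> grind

theorem gb_br2_two_of_cocycle (μ : C K L 2)
    (hh_add : ∀ k < m, AdditiveAt h k) (hh : DependsOn h (Set.Iio m))
    (hf : DependsOn f (Set.Iio n)) (hg : DependsOn g (Set.Iio p))
    (hhμ : delta μ m h = 0) (hfμ : delta μ n f = 0) (hgμ : delta μ p g = 0) :
    gb m (n + p) h (br2 2 n p (ex μ) f g)
      = sgn ((m : ℤ) - 1) • br2 2 (m + n - 1) p (ex μ) (gb m n h f) g
        + sgn (((m : ℤ) - 1) * n) • br2 2 n (m + p - 1) (ex μ) f (gb m p h g)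
        + sgn (((n : ℤ) - 1) + ((p : ℤ) - 1))
          • delta μ (m + n + p - 2) (br2 m n p h f g) := by
  rw [delta_eq_zero_iff] at hhμ hfμ hgμ
  have hμ : ∀ k < 2, AdditiveAt (ex μ) k := fun _ => additiveAt_ex μ
  have comp_brace : tc m (n + p) h (br2 2 n p (ex μ) f g)
      = sgn ((m : ℤ) - 1)
          • (tc 2 (m + n + p - 2) (ex μ) (br2 m n p h f g)
            + br2 2 (m + n - 1) p (ex μ) (tc m n h f) g
            + sgn (((m : ℤ) - 1) * ((n : ℤ) - 1)) • br2 2 n (m + p - 1) (ex μ) f (tc m p h g))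
        - sgn (((n : ℤ) - 1) + ((p : ℤ) - 1))
          • tc (m + n + p - 2) 2 (br2 m n p h f g) (ex μ) := by
    rw [tc_br2_two_right hh_add (dependsOn_ex μ) hf hg hfμ hgμ, hhμ, br2_smul_left,
      br2_tc_two_left hμ hf hg]
  have sgn_mn : sgn (((m : ℤ) - 1) * n)
      = sgn (((m : ℤ) - 1) * ((n : ℤ) - 1)) * sgn ((m : ℤ) - 1) := by
    rw [← sgn_add]
    ring_nf
  have sgn_mnp : sgn (((m : ℤ) - 1) * (((n + p : ℕ) : ℤ) - 1))
      = sgn (((m : ℤ) - 1) * n) * sgn (((m : ℤ) - 1) * ((p : ℤ) - 1)) := by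
    rw [← sgn_add]
    push_cast
    ring_nf
  rw [gb_eq_sub, comp_brace, tc_br2_two_left hμ hf hh, delta_br2, gb_eq_sub, gb_eq_sub,
    br2_sub_middle hμ, br2_sub_right hμ hf, br2_smul_middle hμ, br2_smul_right hμ hf,
    sgn_mnp, sgn_mn]
  have hn := sgn_mul_self ((n : ℤ) - 1)
  have hp := sgn_mul_self ((p : ℤ) - 1)
  have hmp := sgn_mul_self (((m : ℤ) - 1) * ((p : ℤ) - 1))
  simp only [sgn_add]
  match_scalars <;> grind

end Cocycles

theorem leibniz_rule_in_tangent_cohomology_general (μ : C K L 2) {m n p : ℕ}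
    {h f g : (ℕ → L) → L} (hh_add : ∀ k < m, AdditiveAt h k)
    (hh_dep : DependsOn h (Set.Iio m)) (hf_dep : DependsOn f (Set.Iio n))
    (hg_dep : DependsOn g (Set.Iio p)) (hh : delta μ m h = 0) (hf : delta μ n f = 0)
    (hg : delta μ p g = 0) :
    gb m (n + p) h (cup μ n p f g) - cup μ (m + n - 1) p (gb m n h f) g
        - sgn (((m : ℤ) - 1) * (n : ℤ)) • cup μ n (m + p - 1) f (gb m p h g)
      = -(sgn ((p : ℤ) - 1) • delta μ (m + n + p - 2) (br2 m n p h f g)) := by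
  rw [cup_gb, cup_eq_br2, cup_eq_br2, gb_smul_right hh_add,
    gb_br2_two_of_cocycle μ hh_add hh_dep hf_dep hg_dep hh hf hg]
  have hn := sgn_mul_self n
  simp only [sgn_add, sgn_sub, sgn_one]
  match_scalars <;> grind

/-- the Leibniz rule in tangent cohomology: for cocycles
`h, f, g`, the failure of the left Leibniz rule is the coboundary
`−(-1)^{p-1} δ_μ⟨h|fg⟩`, so the Leibniz rule holds in `H_μ(C)`. -/
theorem leibniz_rule_in_tangent_cohomology
    (μ : C K L 2) {m n p : ℕ} (h : C K L m) (f : C K L n) (g : C K L p)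
    (hh : delta μ m (ex h) = 0) (hf : delta μ n (ex f) = 0)
    (hg : delta μ p (ex g) = 0) :
    gb m (n + p) (ex h) (cup μ n p (ex f) (ex g))
        - cup μ (m + n - 1) p (gb m n (ex h) (ex f)) (ex g)
        - sgn (((m : ℤ) - 1) * (n : ℤ)) •
            cup μ n (m + p - 1) (ex f) (gb m p (ex h) (ex g))
      = -(sgn ((p : ℤ) - 1) •
            delta μ (m + n + p - 2) (br2 m n p (ex h) (ex f) (ex g))) := by
  exact leibniz_rule_in_tangent_cohomology_general μ (fun _ => additiveAt_ex h) (dependsOn_ex h)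
    (dependsOn_ex f) (dependsOn_ex g) hh hf hg

end OperadPrelude
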